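/- Let T > 0, A > 0, R > 0, and let k : (0, T) → [0, ∞) be measurable with finite weak-L¹ quasinorm satisfying 2A‖k‖_{1,∞} < 1. Let φ : [0, T] → [0, ∞) be continuous and suppose that for every ε ∈ (0, 1) one has φ(t) ≤ R + A ∫_0^t k(σ)^{1−ε} φ(σ)^{1+2ε} dσ for all t ∈ [0, T]. Then φ is bounded on [0, T]; in fact, for any δ ∈ (0, 1/3) with 2A‖k‖_{1,∞} < 1 − 3δ and any ε ∈ (0,1) such that 1 − δ < R^{−2ε} and 2AεT < δ, one has φ(t) ≤ δ^{−1/(2ε)} for all t ∈ [0, T]. -/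

import Mathlib

open MeasureTheory Set ENNReal intervalIntegral

/-- The weak-`L^p` (Marcinkiewicz) quasinorm
`‖f‖_{p,∞} = sup {α · d_f(α)^(1/p) : α > 0}`, where
`d_f(α) = μ {x | |f x| > α}` is the distribution function of `f`. -/
noncomputable def weakLpNorm {X : Type*} [MeasurableSpace X]
    (μ : Measure X) (p : ℝ) (f : X → ℝ) : ℝ≥0∞ :=
  ⨆ (α : ℝ) (_ : 0 < α), ENNReal.ofReal α * (μ {x | α < |f x|}) ^ (1 / p)

/-- Layer-cake bound: on any measure space, the `L^(1-ε)` integral of a nonnegative function is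
controlled by the total mass and the weak-`L¹` quasinorm. -/
theorem lintegral_rpow_one_sub_le_weakL1 {X : Type*} [MeasurableSpace X] {μ : Measure X}
    {f : X → ℝ} (hf0 : 0 ≤ᵐ[μ] f) (hf : AEMeasurable f μ) {ε : ℝ} (hε : ε ∈ Ioo (0 : ℝ) 1) :
    ∫⁻ x, ENNReal.ofReal (f x ^ (1 - ε)) ∂μ ≤
      μ univ + ENNReal.ofReal ((1 - ε) / ε) * weakLpNorm μ 1 f := by
  obtain ⟨hε0, hε1⟩ := hε
  have hp : 0 < 1 - ε := by linarith
  have hexp : 1 - ε - 1 = -ε := by ring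
  have hlow : ∫⁻ t in Ioc (0 : ℝ) 1, μ {a | t < f a} * ENNReal.ofReal (t ^ (-ε)) ≤
      μ univ * ENNReal.ofReal (1 / (1 - ε)) := by
    calc _ ≤ ∫⁻ t in Ioc (0 : ℝ) 1, μ univ * ENNReal.ofReal (t ^ (-ε)) :=
          lintegral_mono fun t => by gcongr; exact subset_univ _
      _ = μ univ * ∫⁻ t in Ioc (0 : ℝ) 1, ENNReal.ofReal (t ^ (-ε)) :=
          lintegral_const_mul _ (by fun_prop)
      _ = μ univ * ENNReal.ofReal (1 / (1 - ε)) := by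
          have hInterval : IntervalIntegrable (fun t : ℝ => t ^ (-ε)) volume 0 1 :=
            intervalIntegrable_rpow' (by linarith)
          rw [← ofReal_integral_eq_lintegral_ofReal
            ((intervalIntegrable_iff_integrableOn_Ioc_of_le zero_le_one).1 hInterval)
            ((ae_restrict_iff' measurableSet_Ioc).2
              (.of_forall fun t ht => Real.rpow_nonneg ht.1.le _)),
            ← integral_of_le zero_le_one, integral_rpow (Or.inl (by linarith)),
            Real.one_rpow, Real.zero_rpow (by linarith)]
          congr 3 <;> ring
  have hhigh : ∫⁻ t in Ioi (1 : ℝ), μ {a | t < f a} * ENNReal.ofReal (t ^ (-ε)) ≤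
      weakLpNorm μ 1 f * ENNReal.ofReal (1 / ε) := by
    calc _ ≤ ∫⁻ t in Ioi (1 : ℝ), weakLpNorm μ 1 f * ENNReal.ofReal (t ^ (-ε - 1)) := by
          refine setLIntegral_mono' measurableSet_Ioi fun t ht => ?_
          have ht0 : 0 < t := zero_lt_one.trans ht
          have hw : ENNReal.ofReal t * μ {a | t < f a} ≤ weakLpNorm μ 1 f := by
            refine le_trans ?_ (le_iSup₂ (f := fun (α : ℝ) (_ : 0 < α) =>
              ENNReal.ofReal α * (μ {x | α < |f x|}) ^ (1 / (1 : ℝ))) t ht0)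
            simp only [div_one, ENNReal.rpow_one]
            gcongr
            exact le_abs_self _
          have hsplit : t ^ (-ε) = t * t ^ (-ε - 1) := by
            rw [Real.rpow_sub_one ht0.ne']; field_simp
          rw [hsplit, ENNReal.ofReal_mul ht0.le, ← mul_assoc, mul_comm (μ _)]
          gcongr
      _ = weakLpNorm μ 1 f * ∫⁻ t in Ioi (1 : ℝ), ENNReal.ofReal (t ^ (-ε - 1)) :=
          lintegral_const_mul _ (by fun_prop)
      _ = weakLpNorm μ 1 f * ENNReal.ofReal (1 / ε) := by
          rw [← ofReal_integral_eq_lintegral_ofReal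
            (integrableOn_Ioi_rpow_of_lt (by linarith) zero_lt_one)
            ((ae_restrict_iff' measurableSet_Ioi).2
              (.of_forall fun t ht => Real.rpow_nonneg (zero_lt_one.trans ht).le _)),
            integral_Ioi_rpow_of_lt (by linarith) zero_lt_one, Real.one_rpow]
          congr 2
          rw [show -ε - 1 + 1 = -ε by ring, neg_div_neg_eq]
  rw [lintegral_rpow_eq_lintegral_meas_lt_mul μ hf0 hf hp, hexp,
    ← Ioc_union_Ioi_eq_Ioi (zero_le_one' ℝ),
    lintegral_union measurableSet_Ioi (Ioc_disjoint_Ioi le_rfl)]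
  calc _ ≤ ENNReal.ofReal (1 - ε) * (μ univ * ENNReal.ofReal (1 / (1 - ε)) +
        weakLpNorm μ 1 f * ENNReal.ofReal (1 / ε)) := by gcongr
    _ = μ univ * (ENNReal.ofReal (1 - ε) * ENNReal.ofReal (1 / (1 - ε))) +
        (ENNReal.ofReal (1 - ε) * ENNReal.ofReal (1 / ε)) * weakLpNorm μ 1 f := by ring
    _ = _ := by
        rw [← ENNReal.ofReal_mul hp.le, ← ENNReal.ofReal_mul hp.le, mul_one_div_cancel hp.ne',
          mul_one_div, ENNReal.ofReal_one, mul_one]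

/-- The tangent-line inequality for the convex function `x ↦ x ^ (-p)` on `(0, ∞)`. -/
theorem rpow_neg_sub_rpow_neg_le {x y p : ℝ} (hx : 0 < x) (hy : 0 < y) (hp : 0 ≤ p) :
    x ^ (-p) - y ^ (-p) ≤ p * ((y - x) / x ^ (1 + p)) := by
  have hlog : Real.log (y / x) ≤ y / x - 1 := Real.log_le_sub_one_of_pos (div_pos hy hx)
  have hexp : 1 - p * (y / x - 1) ≤ (y / x) ^ (-p) := by
    rw [Real.rpow_def_of_pos (div_pos hy hx)]
    nlinarith [Real.add_one_le_exp (Real.log (y / x) * -p)]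
  have hxp : 0 < x ^ (-p) := Real.rpow_pos_of_pos hx _
  have hypow : y ^ (-p) = x ^ (-p) * (y / x) ^ (-p) := by
    rw [← Real.mul_rpow hx.le (div_pos hy hx).le, mul_div_cancel₀ _ hx.ne']
  have hslope : (y - x) / x ^ (1 + p) = x ^ (-p) * (y / x - 1) := by
    rw [Real.rpow_add hx, Real.rpow_one, Real.rpow_neg hx.le]
    field_simp
  rw [hypow, hslope]
  nlinarith [mul_le_mul_of_nonneg_left hexp hxp.le]

/-- Nonlinear (Bihari-type) comparison in increment form: if `dY ≤ Y ^ (1 + p) dK`, then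
`d(Y ^ (-p)) ≥ -p dK`. -/
theorem rpow_neg_sub_le_of_increment_le {T p : ℝ} (hp : 0 ≤ p) {Y K : ℝ → ℝ}
    (hY : ContinuousOn Y (Icc 0 T)) (hK : ContinuousOn K (Icc 0 T))
    (hKm : MonotoneOn K (Icc 0 T)) (hY0 : ∀ t ∈ Icc 0 T, 0 < Y t)
    (hinc : ∀ s ∈ Icc 0 T, ∀ t ∈ Icc 0 T, s ≤ t → Y t - Y s ≤ (K t - K s) * Y t ^ (1 + p))
    {t : ℝ} (ht : t ∈ Icc 0 T) :
    Y 0 ^ (-p) - p * (K t - K 0) ≤ Y t ^ (-p) := by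
  have h0 : (0 : ℝ) ∈ Icc 0 T := ⟨le_rfl, ht.1.trans ht.2⟩
  have key : ∀ c : ℝ, 1 < c → Y 0 ^ (-p) - p * (K t - K 0) * c ≤ Y t ^ (-p) := by
    intro c hc
    have hpow : ∀ q : ℝ, ContinuousOn (fun s => Y s ^ q) (Icc 0 T) := fun q =>
      hY.rpow_const fun s hs => Or.inl (hY0 s hs).ne'
    let S : Set ℝ := {s | Y 0 ^ (-p) ≤ Y s ^ (-p) + p * (K s - K 0) * c}
    have hS : IsClosed (S ∩ Icc 0 T) := by
      rw [inter_comm]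
      exact isClosed_Icc.isClosed_le continuousOn_const
        ((hpow (-p)).add ((continuousOn_const.mul (hK.sub continuousOn_const)).mul
          continuousOn_const))
    have hsub : Icc 0 T ⊆ S := by
      refine hS.Icc_subset_of_forall_exists_gt (by simp [S]) ?_
      rintro s ⟨hsS, hs⟩ y hy
      have hsI : s ∈ Icc 0 T := Ico_subset_Icc_self hs
      have hYs : 0 < Y s ^ (1 + p) := Real.rpow_pos_of_pos (hY0 s hsI) _
      have hlt : Y s ^ (1 + p) < c * Y s ^ (1 + p) := by nlinarith
      have hcont : Filter.Tendsto (fun s => Y s ^ (1 + p)) (nhdsWithin s (Ioc s T))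
          (nhds (Y s ^ (1 + p))) :=
        (hpow (1 + p) s hsI).mono_left (nhdsWithin_mono _ fun r hr => ⟨hsI.1.trans hr.1.le, hr.2⟩)
      rw [nhdsWithin_Ioc_eq_nhdsGT hs.2] at hcont
      obtain ⟨r, hr1, hr2, hr3⟩ := ((hcont.eventually_lt_const hlt).and
        (Filter.inter_mem (Ioc_mem_nhdsGT hs.2) (Ioc_mem_nhdsGT hy))).exists
      have hrI : r ∈ Icc 0 T := ⟨hsI.1.trans hr2.1.le, hr2.2⟩
      refine ⟨r, ?_, hr3⟩
      have hKr : 0 ≤ K r - K s := sub_nonneg.2 (hKm hsI hrI hr2.1.le)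
      have hstep : (Y r - Y s) / Y s ^ (1 + p) ≤ (K r - K s) * c := by
        rw [div_le_iff₀ hYs]
        calc _ ≤ _ := hinc s hsI r hrI hr2.1.le
          _ ≤ (K r - K s) * (c * Y s ^ (1 + p)) := by gcongr
          _ = _ := by ring
      have htan := rpow_neg_sub_rpow_neg_le (hY0 s hsI) (hY0 r hrI) hp
      have hmul := mul_le_mul_of_nonneg_left hstep hp
      simp only [S, mem_ofPred_eq] at hsS ⊢
      linarith
    have := hsub ht
    simp only [S, mem_ofPred_eq] at this
    linarith
  have hlim : Filter.Tendsto (fun c : ℝ => Y 0 ^ (-p) - p * (K t - K 0) * c)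
      (nhdsWithin 1 (Ioi 1)) (nhds (Y 0 ^ (-p) - p * (K t - K 0) * 1)) :=
    (Continuous.tendsto (by fun_prop) _).mono_left nhdsWithin_le_nhds
  rw [mul_one] at hlim
  exact le_of_tendsto hlim (Filter.eventually_of_mem self_mem_nhdsWithin key)

/-- Let `T > 0`, `A > 0`, `R > 0`, let `k : (0,T) → [0,∞)` be measurable with finite
weak-`L¹` quasinorm satisfying `2A‖k‖_{1,∞} < 1`. Let `φ : [0,T] → [0,∞)` be continuous with
`φ(t) ≤ R + A ∫_0^t k(σ)^(1-ε) φ(σ)^(1+2ε) dσ` on `[0,T]` for every `ε ∈ (0,1)`.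
Then `φ` is bounded on `[0,T]`; more precisely, for any `δ ∈ (0,1/3)` with
`2A‖k‖_{1,∞} < 1 - 3δ`, any `ε ∈ (0,1)` small enough that `1 - δ < R^(-2ε)` and
`2AεT < δ` satisfies `φ(t) ≤ δ^(-1/(2ε))` for all `t ∈ [0,T]`. -/
theorem bounded_of_weakL1_integral_inequality
    (T A R : ℝ) (hT : 0 < T) (hA : 0 < A) (hR : 0 < R)
    (k : ℝ → ℝ) (hk : Measurable k) (hk0 : ∀ σ ∈ Ioo (0 : ℝ) T, 0 ≤ k σ)
    (hkW : ENNReal.ofReal (2 * A) * weakLpNorm (volume.restrict (Ioo (0 : ℝ) T)) 1 k < 1)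
    (φ : ℝ → ℝ) (hφc : ContinuousOn φ (Icc 0 T)) (hφ0 : ∀ t ∈ Icc (0 : ℝ) T, 0 ≤ φ t)
    (hφ : ∀ ε ∈ Ioo (0 : ℝ) 1, ∀ t ∈ Icc (0 : ℝ) T,
      φ t ≤ R + A * ∫ σ in (0 : ℝ)..t, k σ ^ (1 - ε) * φ σ ^ (1 + 2 * ε)) :
    (∃ M : ℝ, ∀ t ∈ Icc (0 : ℝ) T, φ t ≤ M) ∧
      ∀ δ ∈ Ioo (0 : ℝ) (1 / 3),
        ENNReal.ofReal (2 * A) * weakLpNorm (volume.restrict (Ioo (0 : ℝ) T)) 1 k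
            < ENNReal.ofReal (1 - 3 * δ) →
          ∀ ε ∈ Ioo (0 : ℝ) 1, 1 - δ < R ^ (-(2 * ε)) → 2 * A * ε * T < δ →
            ∀ t ∈ Icc (0 : ℝ) T, φ t ≤ δ ^ (-(1 / (2 * ε))) := by
  refine ⟨?_, ?_⟩
  · obtain ⟨M, hM⟩ := isCompact_Icc.bddAbove_image hφc
    exact ⟨M, fun t ht => hM (mem_image_of_mem φ ht)⟩
  intro δ hδ hW ε hε hRε hAε t ht
  set N := weakLpNorm (volume.restrict (Ioo (0 : ℝ) T)) 1 k with hN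
  have hε0 : 0 < ε := hε.1
  have hNtop : N ≠ ∞ := by
    rintro h
    rw [h, ENNReal.mul_top (by simpa using hA)] at hkW
    exact not_top_lt hkW
  have hNreal : 2 * A * N.toReal < 1 - 3 * δ := by
    rw [← ENNReal.ofReal_toReal hNtop, ← ENNReal.ofReal_mul (by positivity)] at hW
    exact (ENNReal.ofReal_lt_ofReal_iff_of_nonneg (by positivity)).1 hW
  -- integrability of `k ^ (1 - ε)` and the bound on its integral
  have hκ0 : 0 ≤ᵐ[volume.restrict (Ioo 0 T)] fun σ => k σ ^ (1 - ε) :=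
    (ae_restrict_iff' measurableSet_Ioo).2 (.of_forall fun σ hσ => Real.rpow_nonneg (hk0 σ hσ) _)
  have hlay := lintegral_rpow_one_sub_le_weakL1 (μ := volume.restrict (Ioo 0 T))
    ((ae_restrict_iff' measurableSet_Ioo).2 (.of_forall hk0)) hk.aemeasurable hε
  rw [Measure.restrict_apply_univ, Real.volume_Ioo, sub_zero, ← hN,
    ← ENNReal.ofReal_toReal hNtop, ← ENNReal.ofReal_mul (div_nonneg (by linarith [hε.2]) hε0.le),
    ← ENNReal.ofReal_add hT.le
      (mul_nonneg (div_nonneg (by linarith [hε.2]) hε0.le) toReal_nonneg)] at hlay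
  have hκi : IntegrableOn (fun σ => k σ ^ (1 - ε)) (Ioo 0 T) :=
    ⟨(hk.pow_const _).aestronglyMeasurable,
      (hasFiniteIntegral_iff_ofReal hκ0).2 (hlay.trans_lt ofReal_lt_top)⟩
  have hκle : ∫ σ in Ioo 0 T, k σ ^ (1 - ε) ≤ T + (1 - ε) / ε * N.toReal := by
    rw [← ofReal_integral_eq_lintegral_ofReal hκi hκ0] at hlay
    exact (ENNReal.ofReal_le_ofReal_iff (add_nonneg hT.le
      (mul_nonneg (div_nonneg (by linarith [hε.2]) hε0.le) toReal_nonneg))).1 hlay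
  have hκI : IntegrableOn (fun σ => k σ ^ (1 - ε)) (Icc 0 T) :=
    (integrableOn_Icc_iff_integrableOn_Ioo (by finiteness) (by finiteness)).2 hκi
  have hwI : IntegrableOn (fun σ => k σ ^ (1 - ε) * φ σ ^ (1 + 2 * ε)) (Icc 0 T) :=
    hκI.mul_continuousOn (hφc.rpow_const fun _ _ => Or.inr (by linarith)) isCompact_Icc
  have hInterval : ∀ {f : ℝ → ℝ}, IntegrableOn f (Icc 0 T) → ∀ {a b : ℝ}, a ∈ Icc 0 T →
      b ∈ Icc 0 T → IntervalIntegrable f volume a b := fun hf a b ha hb =>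
    (hf.mono_set (uIcc_subset_Icc ha hb)).intervalIntegrable
  have hprim : ∀ {f : ℝ → ℝ}, IntegrableOn f (Icc 0 T) →
      ContinuousOn (fun s => ∫ σ in (0 : ℝ)..s, f σ) (Icc 0 T) := fun hf => by
    have := continuousOn_primitive_interval (a := 0) (b := T) (by rwa [uIcc_of_le hT.le])
    rwa [uIcc_of_le hT.le] at this
  have h0 : (0 : ℝ) ∈ Icc 0 T := ⟨le_rfl, hT.le⟩
  have hIoo : ∀ {a b : ℝ}, a ∈ Icc 0 T → b ∈ Icc 0 T → Ioo a b ⊆ Ioo 0 T := fun ha hb =>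
    Ioo_subset_Ioo ha.1 hb.2
  have hnonneg : ∀ {f : ℝ → ℝ}, IntegrableOn f (Icc 0 T) → (∀ σ ∈ Ioo 0 T, 0 ≤ f σ) →
      ∀ {a b : ℝ}, a ∈ Icc 0 T → b ∈ Icc 0 T → a ≤ b → 0 ≤ ∫ σ in a..b, f σ := by
    intro f hf hf0 a b ha hb hab
    rw [integral_of_le hab, integral_Ioc_eq_integral_Ioo]
    exact setIntegral_nonneg measurableSet_Ioo fun σ hσ => hf0 σ (hIoo ha hb hσ)
  have hκnn : ∀ σ ∈ Ioo 0 T, 0 ≤ k σ ^ (1 - ε) := fun σ hσ => Real.rpow_nonneg (hk0 σ hσ) _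
  have hwnn : ∀ σ ∈ Ioo 0 T, 0 ≤ k σ ^ (1 - ε) * φ σ ^ (1 + 2 * ε) := fun σ hσ =>
    mul_nonneg (hκnn σ hσ) (Real.rpow_nonneg (hφ0 σ (Ioo_subset_Icc_self hσ)) _)
  -- the majorant `Y` of `φ` and its driving function `K`
  set Y : ℝ → ℝ := fun s => R + A * ∫ σ in (0 : ℝ)..s, k σ ^ (1 - ε) * φ σ ^ (1 + 2 * ε) with hYdef
  set K : ℝ → ℝ := fun s => A * ∫ σ in (0 : ℝ)..s, k σ ^ (1 - ε)
  have hφY : ∀ s ∈ Icc 0 T, φ s ≤ Y s := hφ ε hε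
  have hKsub : ∀ a ∈ Icc 0 T, ∀ b ∈ Icc 0 T, K b - K a = A * ∫ σ in a..b, k σ ^ (1 - ε) := by
    intro a ha b hb
    rw [← integral_interval_sub_left (hInterval hκI h0 hb) (hInterval hκI h0 ha)]
    ring
  have hYsub : ∀ a ∈ Icc 0 T, ∀ b ∈ Icc 0 T,
      Y b - Y a = A * ∫ σ in a..b, k σ ^ (1 - ε) * φ σ ^ (1 + 2 * ε) := by
    intro a ha b hb
    rw [← integral_interval_sub_left (hInterval hwI h0 hb) (hInterval hwI h0 ha)]
    ring
  have hKm : MonotoneOn K (Icc 0 T) := fun a ha b hb hab => by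
    rw [← sub_nonneg, hKsub a ha b hb]
    exact mul_nonneg hA.le (hnonneg hκI hκnn ha hb hab)
  have hYm : MonotoneOn Y (Icc 0 T) := fun a ha b hb hab => by
    rw [← sub_nonneg, hYsub a ha b hb]
    exact mul_nonneg hA.le (hnonneg hwI hwnn ha hb hab)
  have hYzero : Y 0 = R := by simp [hYdef]
  have hYpos : ∀ s ∈ Icc 0 T, 0 < Y s := fun s hs =>
    hR.trans_le (hYzero ▸ hYm h0 hs hs.1)
  have hinc : ∀ a ∈ Icc 0 T, ∀ b ∈ Icc 0 T, a ≤ b →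
      Y b - Y a ≤ (K b - K a) * Y b ^ (1 + 2 * ε) := by
    intro a ha b hb hab
    rw [hYsub a ha b hb, hKsub a ha b hb, mul_assoc, ← intervalIntegral.integral_mul_const]
    refine mul_le_mul_of_nonneg_left ?_ hA.le
    refine integral_mono_on_of_le_Ioo hab (hInterval hwI ha hb)
      ((hInterval hκI ha hb).mul_const _) ?_
    intro σ hσ
    have hσT := hIoo ha hb hσ
    have hσI := Ioo_subset_Icc_self hσT
    refine mul_le_mul_of_nonneg_left ?_ (hκnn σ hσT)
    exact Real.rpow_le_rpow (hφ0 σ hσI) ((hφY σ hσI).trans (hYm hσI hb hσ.2.le)) (by linarith)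
  have hcomp := rpow_neg_sub_le_of_increment_le (p := 2 * ε) (by linarith)
    (continuousOn_const.add (continuousOn_const.mul (hprim hwI)))
    (continuousOn_const.mul (hprim hκI)) hKm hYpos hinc ht
  have hTI : T ∈ Icc 0 T := ⟨hT.le, le_rfl⟩
  have hKt : K t - K 0 ≤ A * (T + (1 - ε) / ε * N.toReal) := by
    have hle : K t ≤ K T := hKm ht hTI ht.2
    have hKT := hKsub 0 h0 T hTI
    rw [integral_of_le hT.le, integral_Ioc_eq_integral_Ioo] at hKT
    linarith [mul_le_mul_of_nonneg_left hκle hA.le]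
  have hbound : 2 * ε * (K t - K 0) < 1 - 2 * δ := by
    have hmul := mul_le_mul_of_nonneg_left hKt (by linarith : 0 ≤ 2 * ε)
    have heq : 2 * ε * (A * (T + (1 - ε) / ε * N.toReal)) =
        2 * A * ε * T + 2 * A * N.toReal - ε * (2 * A * N.toReal) := by
      field_simp
      ring
    have hpos : 0 ≤ ε * (2 * A * N.toReal) := by positivity
    linarith
  have hδY : δ ≤ Y t ^ (-(2 * ε)) := by
    change Y 0 ^ (-(2 * ε)) - 2 * ε * (K t - K 0) ≤ Y t ^ (-(2 * ε)) at hcomp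
    rw [hYzero] at hcomp
    linarith
  refine (hφY t ht).trans ?_
  have hfin := Real.rpow_le_rpow_of_nonpos hδ.1 hδY
    (by rw [neg_nonpos]; positivity : -(1 / (2 * ε)) ≤ 0)
  rwa [← Real.rpow_mul (hYpos t ht).le, neg_mul_neg, mul_one_div_cancel (by positivity),
    Real.rpow_one] at hfin
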